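/- arXiv:1508.07838 — 2 statements merged into one kernel-verified Lean document; each statement's English description precedes it below -/
import Mathlib

section
/- Let (E¹,𝓔¹),(E²,𝓔²),… be countable discrete measurable spaces and (E^∞,𝓔^∞) an arbitrary measurable space, and let Z₁, Z₂, …, Z be random elements in the product. Then Zₙᵏ → Zᵏ in density as n → ∞ for every k ∈ ℕ if and only if there exists a full coupling (Ẑ₁, Ẑ₂, …, Ẑ) of Z₁, Z₂, …, Z, an ℕ-valued random variable N, and integers 0 ≤ k₁ ≤ k₂ ≤ … → ∞ such that Ẑₙ^{kₙ} = Ẑ^{kₙ} for all n ≥ N. -/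
open MeasureTheory Filter
open scoped ENNReal

/-- `μs n → μ` in density: w.r.t. some σ-finite dominating measure, the liminf of
the densities of the `μs n` equals the density of `μ` almost everywhere. -/
def ConvInDensity {α : Type*} [MeasurableSpace α] (μs : ℕ → Measure α) (μ : Measure α) : Prop :=
  ∃ (lam : Measure α) (f : ℕ → α → ℝ≥0∞) (g : α → ℝ≥0∞),
    SigmaFinite lam ∧ (∀ n, Measurable (f n)) ∧ Measurable g ∧
    (∀ n, μs n = lam.withDensity (f n)) ∧ μ = lam.withDensity g ∧
    (∀ᵐ x ∂lam, liminf (fun n => f n x) atTop = g x)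

/-- Projection onto the first `k` coordinates of an element of
`(E¹ × E² × ⋯) × E^∞`. -/
def proj (E : ℕ → Type) (Einf : Type) (k : ℕ) (z : (∀ i, E i) × Einf) :
    ∀ i : Fin k, E i := fun i => z.1 i


lemma aux_kernel {X ι : Type} [MeasurableSpace X] [Countable ι] (R : Measure X)
    [IsProbabilityMeasure R] (π : X → ι) (hπ : ∀ i, MeasurableSet (π ⁻¹' {i}))
    (m : ι → ℝ≥0∞) (hm : ∀ i, m i ≤ R (π ⁻¹' {i})) :
    ∃ K : Option ι → Measure X, (∀ j, IsProbabilityMeasure (K j)) ∧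
      (∀ i, m i ≠ 0 → ∀ᵐ x ∂(K (some i)), π x = i) ∧
      ∀ A, MeasurableSet A → (∑' i, m i * K (some i) A) + (1 - ∑' i, m i) * K none A = R A := by
  classical
  have hpart : ∀ A, MeasurableSet A → ∑' i, R (π ⁻¹' {i} ∩ A) = R A := by
    intro A hA
    rw [← measure_iUnion]
    · congr 1
      ext x; simp
    · intro i j hij
      rw [Function.onFun, Set.disjoint_left]
      rintro x ⟨h1, _⟩ ⟨h2, _⟩
      exact hij (h1.symm.trans h2)
    · exact fun i => (hπ i).inter hA
  let C : ι → Measure X := fun i =>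
    if R (π ⁻¹' {i}) = 0 then R else ProbabilityTheory.cond R (π ⁻¹' {i})
  have hC : ∀ i, IsProbabilityMeasure (C i) := by
    intro i
    by_cases h : R (π ⁻¹' {i}) = 0
    · simp only [C, h, if_true]; infer_instance
    · simp only [C, h, if_false]; exact ProbabilityTheory.cond_isProbabilityMeasure h
  let σ : Measure X := Measure.sum (fun i => m i • C i)
  have hσA : ∀ A, MeasurableSet A → σ A = ∑' i, m i * C i A := by
    intro A hA
    simp [σ, Measure.sum_apply _ hA]
  have hσle : σ ≤ R := by
    rw [Measure.le_iff]
    intro A hA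
    rw [hσA A hA, ← hpart A hA]
    refine ENNReal.tsum_le_tsum fun i => ?_
    by_cases h : R (π ⁻¹' {i}) = 0
    · have : m i = 0 := by simpa [h] using hm i
      simp [this]
    · simp only [C, h, if_false]
      rw [ProbabilityTheory.cond_apply (hπ i)]
      calc _ ≤ R (π ⁻¹' {i}) * ((R (π ⁻¹' {i}))⁻¹ * R (π ⁻¹' {i} ∩ A)) := by
            gcongr; exact hm i
        _ = _ := by
            rw [← mul_assoc, ENNReal.mul_inv_cancel h (measure_ne_top _ _), one_mul]
  have hσu : σ Set.univ = ∑' i, m i := by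
    rw [hσA _ MeasurableSet.univ]; simp
  have : IsFiniteMeasure σ := ⟨(hσle Set.univ).trans_lt (measure_lt_top _ _)⟩
  let ρ := R - σ
  have hρ : ρ + σ = R := Measure.sub_add_cancel_of_le hσle
  have hρu : ρ Set.univ = 1 - ∑' i, m i := by
    rw [← hσu]
    have := congrArg (fun μ : Measure X => μ Set.univ) hρ
    simp only [Measure.add_apply, measure_univ] at this
    rw [← this, ENNReal.add_sub_cancel_right (measure_ne_top _ _)]
  have hρfin : ρ Set.univ ≠ ⊤ := by rw [hρu]; exact ne_top_of_le_ne_top ENNReal.one_ne_top tsub_le_self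
  let D : Measure X := if ρ Set.univ = 0 then R else (ρ Set.univ)⁻¹ • ρ
  refine ⟨fun j => j.elim D C, ?_, ?_, ?_⟩
  · rintro (_ | i)
    · by_cases h : ρ Set.univ = 0
      · simp only [Option.elim, D, h, if_true]; infer_instance
      · simp only [Option.elim, D, h, if_false]
        exact ⟨by simp [ENNReal.inv_mul_cancel h hρfin]⟩
    · exact hC i
  · intro i hi
    have h : R (π ⁻¹' {i}) ≠ 0 := fun h => hi (by simpa [h] using hm i)
    simp only [Option.elim, C, h, if_false]
    exact ProbabilityTheory.ae_cond_mem (hπ i)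
  · intro A hA
    simp only [Option.elim]
    rw [← hσA A hA, ← hρu]
    have h2 : ρ Set.univ * D A = ρ A := by
      by_cases h : ρ Set.univ = 0
      · rw [h, zero_mul]
        exact (measure_mono_null (Set.subset_univ A) h).symm
      · simp only [D, h, if_false, Measure.smul_apply, smul_eq_mul]
        rw [← mul_assoc, ENNReal.mul_inv_cancel h hρfin, one_mul]
    rw [h2, add_comm, ← Measure.add_apply, hρ]

lemma aux_unif (p q : ℝ≥0∞) (hp : p ≤ 1) :
    p * (volume.restrict (Set.Ioo (0:ℝ) 1)) {u : ℝ | ENNReal.ofReal u * p ≤ q} = min p q := by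
  by_cases h0 : p = 0
  · simp [h0]
  have hpt : p ≠ ⊤ := ne_top_of_le_ne_top ENNReal.one_ne_top hp
  rcases le_total p q with h | h
  · rw [min_eq_left h, Measure.restrict_apply']
    · have : {u : ℝ | ENNReal.ofReal u * p ≤ q} ∩ Set.Ioo (0:ℝ) 1 = Set.Ioo (0:ℝ) 1 := by
        rw [Set.inter_eq_right]
        intro u hu
        have : ENNReal.ofReal u ≤ 1 := by simpa using hu.2.le
        exact (mul_le_of_le_one_left' this).trans h
      simp [this]
    · exact measurableSet_Ioo
  · rw [min_eq_right h]
    have hqt : q ≠ ⊤ := ne_top_of_le_ne_top hpt h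
    have hr1 : q / p ≤ 1 := ENNReal.div_le_of_le_mul (by simpa using h)
    have hrt : q / p ≠ ⊤ := ne_top_of_le_ne_top ENNReal.one_ne_top hr1
    have hset : {u : ℝ | ENNReal.ofReal u * p ≤ q} = Set.Iic (q / p).toReal := by
      ext u
      simp only [Set.mem_ofPred_eq, Set.mem_Iic]
      rw [← ENNReal.le_div_iff_mul_le (Or.inl h0) (Or.inl hpt), ENNReal.ofReal_le_iff_le_toReal hrt]
    have hr1' : (q/p).toReal ≤ 1 := by
      simpa using ENNReal.toReal_mono ENNReal.one_ne_top hr1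
    rw [hset, Measure.restrict_congr_set (Ioo_ae_eq_Ioc (a := (0:ℝ)) (b := 1)),
      Measure.restrict_apply measurableSet_Iic]
    have : Set.Iic (q / p).toReal ∩ Set.Ioc 0 1 = Set.Ioc 0 (q/p).toReal := by
      ext u; simp only [Set.mem_inter_iff, Set.mem_Iic, Set.mem_Ioc]
      constructor
      · rintro ⟨a, b, c⟩; exact ⟨b, a⟩
      · rintro ⟨a, b⟩; exact ⟨b, a, b.trans hr1'⟩
    rw [this, Real.volume_Ioc, sub_zero, ENNReal.ofReal_toReal hrt]
    exact ENNReal.mul_div_cancel h0 hpt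

lemma aux_dens {α : Type} [MeasurableSpace α] [Countable α] [MeasurableSingletonClass α]
    (μs : ℕ → Measure α) (μ : Measure α)
    (h : ∀ i, Tendsto (fun n => μs n {i}) atTop (nhds (μ {i}))) : ConvInDensity μs μ := by
  have key : ∀ ν : Measure α, ν = Measure.count.withDensity (fun i => ν {i}) := by
    intro ν
    refine Measure.ext_of_singleton fun a => ?_
    rw [withDensity_apply _ (measurableSet_singleton a)]
    simp
  exact ⟨Measure.count, fun n i => μs n {i}, fun i => μ {i}, inferInstance,
    fun n => measurable_of_countable _, measurable_of_countable _, fun n => key _, key _,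
    Eventually.of_forall fun i => (h i).liminf_eq⟩

lemma aux_dens' {α : Type} [MeasurableSpace α] [MeasurableSingletonClass α]
    (μs : ℕ → Measure α) (μ : Measure α) [IsFiniteMeasure μ]
    (h : ConvInDensity μs μ) (i : α) (c : ℝ≥0∞) (hc : c < μ {i}) :
    ∀ᶠ n in atTop, c ≤ μs n {i} := by
  obtain ⟨lam, f, g, hs, hf, hg, h1, h2, h3⟩ := h
  have e : ∀ f : α → ℝ≥0∞, lam.withDensity f {i} = f i * lam {i} := by
    intro f
    rw [withDensity_apply _ (measurableSet_singleton i)]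
    simp [mul_comm]
  rw [h2, e] at hc
  have hl0 : lam {i} ≠ 0 := by
    intro h; simp [h] at hc
  have hlt : lam {i} ≠ ⊤ := (measure_singleton_lt_top).ne
  have h4 : liminf (fun n => f n i) atTop = g i := by
    by_contra hne
    exact hl0 (measure_mono_null (by intro x hx; rw [Set.mem_singleton_iff.1 hx]; exact hne) h3)
  have h5 : c / lam {i} < liminf (fun n => f n i) atTop := by
    rw [h4]; exact ENNReal.div_lt_of_lt_mul hc
  filter_upwards [eventually_lt_of_lt_liminf h5] with n hn
  rw [h1, e]
  exact (ENNReal.div_le_iff hl0 hlt).1 hn.le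

lemma aux_diag {Y : Type} [MeasurableSpace Y] (ν : Measure Y) [IsProbabilityMeasure ν]
    (Acc : ℕ → ℕ → Set Y) (hA : ∀ k n, MeasurableSet (Acc k n))
    (h : ∀ k, ∀ᵐ y ∂ν, ∀ᶠ n in atTop, y ∈ Acc k n) :
    ∃ kf : ℕ → ℕ, Monotone kf ∧ Tendsto kf atTop atTop ∧
      ∀ᵐ y ∂ν, ∀ᶠ n in atTop, y ∈ Acc (kf n) n := by
  let B : ℕ → ℕ → Set Y := fun k n => ⋃ m, ⋃ (_ : n ≤ m), (Acc k m)ᶜ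
  have hBm : ∀ k n, MeasurableSet (B k n) := fun k n =>
    MeasurableSet.iUnion fun m => MeasurableSet.iUnion fun _ => (hA k m).compl
  have hBa : ∀ k, Antitone (B k) := by
    intro k a b hab y hy
    simp only [B, Set.mem_iUnion] at hy ⊢
    obtain ⟨m, hm, hy⟩ := hy
    exact ⟨m, hab.trans hm, hy⟩
  have hB0 : ∀ k, ν (⋂ n, B k n) = 0 := by
    intro k
    refine measure_mono_null ?_ (ae_iff.1 (h k))
    intro y hy hy'
    obtain ⟨a, ha⟩ := eventually_atTop.1 hy'
    have := Set.mem_iInter.1 hy a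
    simp only [B, Set.mem_iUnion] at this
    obtain ⟨m, hm, hy⟩ := this
    exact hy (ha m hm)
  have hBt : ∀ k, Tendsto (fun n => ν (B k n)) atTop (nhds 0) := by
    intro k
    rw [← hB0 k]
    exact tendsto_measure_iInter_atTop (fun n => (hBm k n).nullMeasurableSet) (hBa k)
      ⟨0, measure_ne_top _ _⟩
  have hex : ∀ k, ∃ n, ν (B k n) ≤ (2⁻¹ : ℝ≥0∞) ^ k := by
    intro k
    have : (0:ℝ≥0∞) < (2⁻¹ : ℝ≥0∞) ^ k := ENNReal.pow_pos (by simp) k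
    exact ((hBt k).eventually_le_const this).exists
  choose M hM using hex
  have hsum : ∑' k, ν (B k (M k)) ≠ ⊤ := by
    refine ne_top_of_le_ne_top ?_ (ENNReal.tsum_le_tsum hM)
    rw [ENNReal.tsum_geometric]
    simp
  let kf : ℕ → ℕ := fun n => Nat.findGreatest (fun k => M k ≤ n) n
  have hkt : Tendsto kf atTop atTop := by
    refine tendsto_atTop.2 fun k => ?_
    filter_upwards [eventually_ge_atTop (max k (M k))] with n hn
    exact Nat.le_findGreatest ((le_max_left _ _).trans hn) ((le_max_right _ _).trans hn)
  refine ⟨kf, ?_, hkt, ?_⟩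
  · intro a b hab
    exact Nat.findGreatest_mono (fun k hk => le_trans hk hab) hab
  · filter_upwards [ae_eventually_notMem hsum] with y hy
    filter_upwards [hkt.eventually hy, eventually_ge_atTop (M 0)] with n hn hn0
    have h1 : M (kf n) ≤ n :=
      Nat.findGreatest_spec (P := fun k => M k ≤ n) (Nat.zero_le n) hn0
    by_contra hc
    exact hn (Set.mem_iUnion.2 ⟨n, Set.mem_iUnion.2 ⟨h1, hc⟩⟩)

lemma aux_N {Y : Type} [MeasurableSpace Y] (ν : Measure Y)
    (G : ℕ → Set Y) (hG : ∀ n, MeasurableSet (G n))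
    (h : ∀ᵐ y ∂ν, ∀ᶠ n in atTop, y ∈ G n) :
    ∃ N : Y → ℕ, Measurable N ∧ ∀ᵐ y ∂ν, ∀ n, N y ≤ n → y ∈ G n := by
  classical
  let T : ℕ → Set Y := fun n => ⋂ m, ⋂ (_ : n ≤ m), G m
  have hT : ∀ n, MeasurableSet (T n) := fun n =>
    MeasurableSet.iInter fun m => MeasurableSet.iInter fun _ => hG m
  let P : Y → ℕ → Prop := fun y n => y ∈ T n ∪ (⋃ n, T n)ᶜ
  have hP : ∀ y, ∃ n, P y n := by
    intro y
    by_cases hy : y ∈ ⋃ n, T n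
    · obtain ⟨n, hn⟩ := Set.mem_iUnion.1 hy
      exact ⟨n, Or.inl hn⟩
    · exact ⟨0, Or.inr hy⟩
  refine ⟨fun y => Nat.find (hP y), measurable_find hP fun n =>
    (hT n).union (MeasurableSet.iUnion hT).compl, ?_⟩
  filter_upwards [h] with y hy n hn
  obtain ⟨a, ha⟩ := eventually_atTop.1 hy
  have hyT : y ∈ ⋃ n, T n :=
    Set.mem_iUnion.2 ⟨a, Set.mem_iInter.2 fun m => Set.mem_iInter.2 fun hm => ha m hm⟩
  rcases Nat.find_spec (hP y) with h1 | h1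
  · exact Set.mem_iInter.1 (Set.mem_iInter.1 h1 n) hn
  · exact absurd hyT h1

lemma aux_select {Y X S J : Type} [MeasurableSpace Y] [MeasurableSpace X] [Countable J]
    (ν : Measure Y) [IsProbabilityMeasure ν] (K : S → Measure X)
    [∀ s, IsProbabilityMeasure (K s)] (g : Y → J) (hg : ∀ j, MeasurableSet (g ⁻¹' {j}))
    (e : J → S) :
    Measurable (fun ω : Y × (S → X) => ω.2 (e (g ω.1))) ∧
    ∀ A, MeasurableSet A → (ν.prod (Measure.infinitePi K)).map
      (fun ω : Y × (S → X) => ω.2 (e (g ω.1))) A = ∑' j, ν (g ⁻¹' {j}) * K (e j) A := by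
  have hpre : ∀ A : Set X, (fun ω : Y × (S → X) => ω.2 (e (g ω.1))) ⁻¹' A =
      ⋃ j, (g ⁻¹' {j}) ×ˢ ((fun w : S → X => w (e j)) ⁻¹' A) := by
    intro A
    ext ⟨y, w⟩
    simp
  have hm : Measurable (fun ω : Y × (S → X) => ω.2 (e (g ω.1))) := by
    intro A hA
    rw [hpre]
    exact MeasurableSet.iUnion fun j => (hg j).prod (measurable_pi_apply (e j) hA)
  refine ⟨hm, fun A hA => ?_⟩
  rw [Measure.map_apply hm hA, hpre, measure_iUnion]
  · refine tsum_congr fun j => ?_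
    rw [Measure.prod_prod]
    congr 1
    rw [← Measure.map_apply (measurable_pi_apply (e j)) hA, Measure.infinitePi_map_eval]
  · intro i j hij
    rw [Function.onFun, Set.disjoint_left]
    rintro x ⟨h1, _⟩ ⟨h2, _⟩
    exact hij (h1.symm.trans h2)
  · exact fun j => (hg j).prod (measurable_pi_apply (e j) hA)

lemma aux_back {Y α : Type} [MeasurableSpace Y] [MeasurableSpace α] [MeasurableSingletonClass α]
    (ν : Measure Y) [IsProbabilityMeasure ν] (Zh : ℕ → Y → α) (Z : Y → α)
    (hZh : ∀ n, Measurable (Zh n)) (hZ : Measurable Z) (N : Y → ℕ) (hN : Measurable N)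
    (h : ∀ᶠ n in atTop, ∀ᵐ y ∂ν, N y ≤ n → Zh n y = Z y) (i : α) :
    Tendsto (fun n => ν.map (Zh n) {i}) atTop (nhds (ν.map Z {i})) := by
  have hB : Tendsto (fun n => ν {y | n < N y}) atTop (nhds 0) := by
    have h0 : ν (⋂ n, {y | n < N y}) = 0 := by
      have : (⋂ n, {y | n < N y}) = ∅ := by
        ext y
        simp only [Set.mem_iInter, Set.mem_ofPred_eq, Set.mem_empty_iff_false, iff_false]
        exact fun h => lt_irrefl _ (h (N y))
      simp [this]
    rw [← h0]
    exact tendsto_measure_iInter_atTop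
      (fun n => (measurableSet_lt measurable_const hN).nullMeasurableSet)
      (fun a b hab y hy => lt_of_le_of_lt hab hy) ⟨0, measure_ne_top _ _⟩
  have hs := measurableSet_singleton i
  have hle : ∀ (U V : Y → α) (n : ℕ), (∀ᵐ y ∂ν, N y ≤ n → U y = V y) →
      ν (U ⁻¹' {i}) ≤ ν (V ⁻¹' {i}) + ν {y | n < N y} := by
    intro U V n hUV
    refine le_trans (measure_mono_ae ?_) (measure_union_le _ _)
    filter_upwards [hUV] with y hy hU
    by_cases hn : N y ≤ n
    · left
      change V y = i
      rw [← hy hn]; exact hU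
    · right; exact not_le.1 hn
  simp only [Measure.map_apply (hZh _) hs, Measure.map_apply hZ hs]
  have t1 : Tendsto (fun n => ν (Z ⁻¹' {i}) - ν {y | n < N y}) atTop (nhds (ν (Z ⁻¹' {i}))) := by
    simpa using ENNReal.Tendsto.sub (tendsto_const_nhds (x := ν (Z ⁻¹' {i}))) hB
      (Or.inl (measure_ne_top _ _))
  have t2 : Tendsto (fun n => ν (Z ⁻¹' {i}) + ν {y | n < N y}) atTop (nhds (ν (Z ⁻¹' {i}))) := by
    simpa using (tendsto_const_nhds (x := ν (Z ⁻¹' {i}))).add hB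
  refine tendsto_of_tendsto_of_tendsto_of_le_of_le' t1 t2 ?_ ?_
  · filter_upwards [h] with n hn
    refine tsub_le_iff_right.2 (hle _ _ n ?_)
    filter_upwards [hn] with y hy h using (hy h).symm
  · filter_upwards [h] with n hn
    exact hle _ _ n hn

lemma aux_tsum_option {ι : Type} (f : Option ι → ℝ≥0∞) :
    ∑' j, f j = (∑' i, f (some i)) + f none := by
  rw [← (Equiv.optionEquivSumPUnit.{0} ι).symm.tsum_eq f,
    Summable.tsum_sum ENNReal.summable ENNReal.summable]
  simp

/-- Corollary 2 (full coupling): if the finite-time state spaces are countable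
and discrete, then `Zₙᵏ → Zᵏ` in density for every `k` iff there exist a full
coupling `(Ẑ₁, Ẑ₂, …, Ẑ)` of `Z₁, Z₂, …, Z`, an `ℕ`-valued random variable `N`
and integers `0 ≤ k₁ ≤ k₂ ≤ … → ∞` such that `Ẑₙ^{kₙ} = Ẑ^{kₙ}` for `n ≥ N`. -/
theorem stmt12 (E : ℕ → Type) [∀ i, Countable (E i)] [∀ i, MeasurableSpace (E i)]
    [∀ i, MeasurableSingletonClass (E i)]
    (hdisc : ∀ i, ∀ A : Set (E i), MeasurableSet A)
    (Einf : Type) [MeasurableSpace Einf]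
    (Qn : ℕ → Measure ((∀ i, E i) × Einf)) (Q : Measure ((∀ i, E i) × Einf))
    [∀ n, IsProbabilityMeasure (Qn n)] [IsProbabilityMeasure Q] :
    (∀ k : ℕ, ConvInDensity (fun n => (Qn n).map (proj E Einf k))
        (Q.map (proj E Einf k))) ↔
      ∃ (Ω : Type) (_ : MeasurableSpace Ω) (Pr : Measure Ω),
        IsProbabilityMeasure Pr ∧
        ∃ (Zh : ℕ → Ω → (∀ i, E i) × Einf) (Z : Ω → (∀ i, E i) × Einf) (N : Ω → ℕ)
          (k : ℕ → ℕ),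
          Monotone k ∧ Tendsto k atTop atTop ∧
          (∀ n, Measurable (Zh n)) ∧ Measurable Z ∧ Measurable N ∧
          (∀ n, Pr.map (Zh n) = Qn n) ∧ Pr.map Z = Q ∧
          (∀ᵐ ω ∂Pr, ∀ n, N ω ≤ n →
            proj E Einf (k n) (Zh n ω) = proj E Einf (k n) (Z ω)) := by
  classical
  have hpm : ∀ k, Measurable (proj E Einf k) := fun k =>
    measurable_pi_lambda _ fun i => (measurable_pi_apply (i : ℕ)).comp measurable_fst
  have hfib : ∀ k i, MeasurableSet (proj E Einf k ⁻¹' {i}) := fun k i =>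
    hpm k (measurableSet_singleton i)
  constructor
  · intro hconv
    let u0 : Measure ℝ := volume.restrict (Set.Ioo (0:ℝ) 1)
    have hu0 : IsProbabilityMeasure u0 := ⟨by simp [u0]⟩
    let ν : Measure (((∀ i, E i) × Einf) × ℝ) := Q.prod u0
    have hν : IsProbabilityMeasure ν := by infer_instance
    let p : ∀ k, (∀ i : Fin k, E i) → ℝ≥0∞ := fun k i => Q (proj E Einf k ⁻¹' {i})
    let q : ∀ n k, (∀ i : Fin k, E i) → ℝ≥0∞ := fun n k i => Qn n (proj E Einf k ⁻¹' {i})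
    let Acc : ℕ → ℕ → Set (((∀ i, E i) × Einf) × ℝ) := fun k n =>
      {y | ENNReal.ofReal y.2 * p k (proj E Einf k y.1) ≤ q n k (proj E Einf k y.1)}
    have hAcc : ∀ k n, MeasurableSet (Acc k n) := by
      intro k n
      refine measurableSet_le ?_ ?_
      · exact (ENNReal.measurable_ofReal.comp measurable_snd).mul
          ((measurable_of_countable (p k)).comp ((hpm k).comp measurable_fst))
      · exact (measurable_of_countable (q n k)).comp ((hpm k).comp measurable_fst)
    have hAev : ∀ k, ∀ᵐ y ∂ν, ∀ᶠ n in atTop, y ∈ Acc k n := by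
      intro k
      have h1 : ∀ᵐ z ∂Q, p k (proj E Einf k z) ≠ 0 := by
        have : ∀ᵐ z ∂Q, ∀ i, p k i = 0 → proj E Einf k z ≠ i := by
          rw [ae_all_iff]
          intro i
          by_cases hi : p k i = 0
          · filter_upwards [measure_eq_zero_iff_ae_notMem.1 hi] with z hz _ hz'
            exact hz hz'
          · exact Eventually.of_forall fun z h => absurd h hi
        filter_upwards [this] with z hz h0
        exact hz _ h0 rfl
      have h2 : ∀ᵐ u ∂u0, u < 1 := by
        filter_upwards [ae_restrict_mem measurableSet_Ioo] with u hu using hu.2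
      have h1' : ∀ᵐ y ∂ν, p k (proj E Einf k y.1) ≠ 0 :=
        Measure.quasiMeasurePreserving_fst.ae h1
      have h2' : ∀ᵐ y ∂ν, y.2 < 1 := Measure.quasiMeasurePreserving_snd.ae h2
      filter_upwards [h1', h2'] with y hy1 hy2
      have hmapp : ∀ (R : Measure ((∀ i, E i) × Einf)) (i : ∀ i : Fin k, E i),
          R.map (proj E Einf k) {i} = R (proj E Einf k ⁻¹' {i}) := fun R i =>
        Measure.map_apply (hpm k) (measurableSet_singleton i)
      have := aux_dens' _ _ (hconv k) (proj E Einf k y.1)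
        (ENNReal.ofReal y.2 * p k (proj E Einf k y.1)) (by
          rw [hmapp]
          have hlt : ENNReal.ofReal y.2 < 1 := by simpa using hy2
          calc _ < 1 * p k (proj E Einf k y.1) :=
                ENNReal.mul_lt_mul_left hy1 (measure_ne_top _ _) hlt
            _ = _ := one_mul _)
      filter_upwards [this] with n hn
      rw [hmapp] at hn
      exact hn
    obtain ⟨kf, hmono, htend, hev⟩ := aux_diag ν Acc hAcc hAev
    let m : ∀ n, (∀ i : Fin (kf n), E i) → ℝ≥0∞ := fun n i => min (p (kf n) i) (q n (kf n) i)
    have hK := fun n => aux_kernel (Qn n) (proj E Einf (kf n)) (hfib (kf n)) (m n)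
      (fun i => min_le_right _ _)
    choose K hKp hKs hKsum using hK
    let S := Σ n, Option (∀ i : Fin (kf n), E i)
    let KS : S → Measure ((∀ i, E i) × Einf) := fun s => K s.1 s.2
    have hKS : ∀ s, IsProbabilityMeasure (KS s) := fun s => hKp s.1 s.2
    let g : ∀ n, (((∀ i, E i) × Einf) × ℝ) → Option (∀ i : Fin (kf n), E i) := fun n y =>
      if y ∈ Acc (kf n) n then some (proj E Einf (kf n) y.1) else none
    have hgs : ∀ n i, g n ⁻¹' {some i} =
        (proj E Einf (kf n) ⁻¹' {i}) ×ˢ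
          {u : ℝ | ENNReal.ofReal u * p (kf n) i ≤ q n (kf n) i} := by
      intro n i
      ext ⟨z, u⟩
      simp only [g, Acc, Set.mem_preimage, Set.mem_singleton_iff, Set.mem_prod, Set.mem_ofPred_eq]
      constructor
      · intro h
        split_ifs at h with h'
        have h2 := Option.some.inj h
        subst h2
        exact ⟨rfl, h'⟩
      · rintro ⟨rfl, h⟩
        rw [if_pos h]
    have hgsm : ∀ n i, MeasurableSet (g n ⁻¹' {some i}) := by
      intro n i
      rw [hgs]
      exact (hfib _ _).prod (measurableSet_le
        (ENNReal.measurable_ofReal.mul measurable_const) measurable_const)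
    have hgn : ∀ n, g n ⁻¹' {none} = (⋃ i, g n ⁻¹' {some i})ᶜ := by
      intro n
      ext y
      simp only [Set.mem_preimage, Set.mem_singleton_iff, Set.mem_compl_iff, Set.mem_iUnion]
      rw [← Option.not_isSome_iff_eq_none, Option.isSome_iff_exists]
    have hgm : ∀ n j, MeasurableSet (g n ⁻¹' {j}) := by
      rintro n (_ | i)
      · rw [hgn]; exact (MeasurableSet.iUnion (hgsm n)).compl
      · exact hgsm n i
    have hνs : ∀ n i, ν (g n ⁻¹' {some i}) = m n i := by
      intro n i
      rw [hgs, Measure.prod_prod]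
      exact aux_unif _ _ prob_le_one
    have hνn : ∀ n, ν (g n ⁻¹' {none}) = 1 - ∑' i, m n i := by
      intro n
      rw [hgn, prob_compl_eq_one_sub (MeasurableSet.iUnion (hgsm n)), measure_iUnion]
      · simp only [hνs]
      · intro i j hij
        rw [Function.onFun, Set.disjoint_left]
        intro y h1 h2
        exact hij (Option.some.inj (h1.symm.trans h2))
      · exact hgsm n
    let Pr := ν.prod (Measure.infinitePi KS)
    have hsel := fun n => aux_select ν KS (g n) (hgm n) (fun j => (⟨n, j⟩ : S))
    let Zh : ℕ → ((((∀ i, E i) × Einf) × ℝ) × (S → (∀ i, E i) × Einf)) → (∀ i, E i) × Einf :=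
      fun n ω => ω.2 ⟨n, g n ω.1⟩
    let Z : ((((∀ i, E i) × Einf) × ℝ) × (S → (∀ i, E i) × Einf)) → (∀ i, E i) × Einf :=
      fun ω => ω.1.1
    have hZhm : ∀ n, Measurable (Zh n) := fun n => (hsel n).1
    have hZm : Measurable Z := measurable_fst.comp measurable_fst
    let G : ℕ → Set ((((∀ i, E i) × Einf) × ℝ) × (S → (∀ i, E i) × Einf)) := fun n =>
      {ω | proj E Einf (kf n) (Zh n ω) = proj E Einf (kf n) (Z ω)}
    have hG : ∀ n, MeasurableSet (G n) := fun n =>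
      by
      have : G n = ⋃ i, (Zh n ⁻¹' (proj E Einf (kf n) ⁻¹' {i})) ∩
          (Z ⁻¹' (proj E Einf (kf n) ⁻¹' {i})) := by
        ext ω
        simp [G, eq_comm]
      rw [this]
      exact MeasurableSet.iUnion fun i => (hZhm n (hfib _ i)).inter (hZm (hfib _ i))
    have hGev : ∀ᵐ ω ∂Pr, ∀ᶠ n in atTop, ω ∈ G n := by
      have h1 : ∀ᵐ ω ∂Pr, ∀ᶠ n in atTop, ω.1 ∈ Acc (kf n) n :=
        Measure.quasiMeasurePreserving_fst.ae hev
      have h2 : ∀ᵐ ω ∂Pr, ∀ n i, g n ω.1 = some i →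
          proj E Einf (kf n) (ω.2 ⟨n, some i⟩) = i := by
        rw [ae_all_iff]; intro n
        rw [ae_all_iff]; intro i
        by_cases hi : m n i = 0
        · have : ∀ᵐ y ∂ν, y ∉ g n ⁻¹' {some i} :=
            measure_eq_zero_iff_ae_notMem.1 ((hνs n i).trans hi)
          have h3 : ∀ᵐ ω ∂Pr, ω.1 ∉ g n ⁻¹' {some i} :=
            Measure.quasiMeasurePreserving_fst.ae this
          filter_upwards [h3] with ω hω h
          exact absurd h hω
        · have h4 := hKs n i hi
          have h5 : ∀ᵐ w ∂(Measure.infinitePi KS),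
              proj E Einf (kf n) (w ⟨n, some i⟩) = i :=
            (measurePreserving_eval_infinitePi KS ⟨n, some i⟩).quasiMeasurePreserving.ae h4
          have h6 : ∀ᵐ ω ∂Pr, proj E Einf (kf n) (ω.2 ⟨n, some i⟩) = i :=
            Measure.quasiMeasurePreserving_snd.ae h5
          filter_upwards [h6] with ω hω _ using hω
      filter_upwards [h1, h2] with ω hω1 hω2
      filter_upwards [hω1] with n hn
      have h7 : g n ω.1 = some (proj E Einf (kf n) ω.1.1) := if_pos hn
      change proj E Einf (kf n) (ω.2 ⟨n, g n ω.1⟩) = _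
      rw [h7]
      exact hω2 n _ h7
    obtain ⟨N, hNm, hN⟩ := aux_N Pr G hG hGev
    refine ⟨_, inferInstance, Pr, inferInstance, Zh, Z, N, kf, hmono, htend, hZhm, hZm, hNm,
      ?_, ?_, hN⟩
    · intro n
      ext A hA
      refine ((hsel n).2 A hA).trans ?_
      rw [aux_tsum_option, hνn, ← hKsum n A hA]
      simp only [hνs, KS]
    · change Measure.map (Prod.fst ∘ Prod.fst) Pr = Q
      rw [← Measure.map_map measurable_fst measurable_fst]
      simp [Pr, ν]
  · rintro ⟨Ω, _, Pr, _, Zh, Z, N, k, hk, hkt, hZh, hZ, hN, hlaw, hlawZ, hae⟩ j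
    refine aux_dens _ _ fun i => ?_
    have := aux_back Pr (fun n ω => proj E Einf j (Zh n ω)) (fun ω => proj E Einf j (Z ω))
      (fun n => (hpm j).comp (hZh n)) ((hpm j).comp hZ) N hN (by
        filter_upwards [hkt.eventually_ge_atTop j] with n hn
        filter_upwards [hae] with ω hω hNn
        have h1 := hω n hNn
        funext a
        exact congrFun h1 (Fin.castLE hn a)) i
    have e1 : ∀ n, (Qn n).map (proj E Einf j) = Pr.map (fun ω => proj E Einf j (Zh n ω)) := by
      intro n
      rw [← hlaw n, Measure.map_map (hpm j) (hZh n)]; rfl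
    have e2 : Q.map (proj E Einf j) = Pr.map (fun ω => proj E Einf j (Z ω)) := by
      rw [← hlawZ, Measure.map_map (hpm j) hZ]; rfl
    simp only [e1, e2]
    exact this
end

section
/- Let E be a metric space with metric d and Borel σ-algebra 𝓔, and let X₁, X₂, …, X be random elements of E such that X takes values almost surely in a separable Borel set E₀. Then Xₙ → X in distribution as n → ∞ if and only if there exists a coupling (X̂₁, X̂₂, …, X̂) of X₁, X₂, …, X such that d(X̂ₙ, X̂) → 0 pointwise (everywhere on the underlying probability space, after removing a null event) as n → ∞. -/
open MeasureTheory Filter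
open scoped ENNReal BoundedContinuousFunction

lemma aux_notMem_frontier {E : Type} [TopologicalSpace E] (s : Set E) (x : E) :
    x ∉ frontier s ↔ ∀ᶠ y in nhds x, (y ∈ s ↔ x ∈ s) := by
  rw [frontier_eq_closure_inter_closure, Set.mem_inter_iff, not_and_or, ← Set.mem_compl_iff,
    ← Set.mem_compl_iff, ← interior_compl, ← interior_compl, compl_compl,
    mem_interior_iff_mem_nhds, mem_interior_iff_mem_nhds]
  constructor
  · rintro (h | h)
    · have hx := mem_of_mem_nhds h
      filter_upwards [h] with y hy
      exact iff_of_false hy hx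
    · have hx := mem_of_mem_nhds h
      filter_upwards [h] with y hy
      exact iff_of_true hy hx
  · intro h
    by_cases hx : x ∈ s
    · right
      filter_upwards [h] with y hy
      exact hy.2 hx
    · left
      filter_upwards [h] with y hy
      exact fun h' => hx (hy.1 h')

lemma aux_partition {E : Type} [MetricSpace E] [MeasurableSpace E] [BorelSpace E]
    (P : Measure E) [IsProbabilityMeasure P]
    (E0 : Set E) (hsep : TopologicalSpace.IsSeparable E0)
    (hP1 : P E0 = 1) (e : ℝ) (he : 0 < e) :
    ∃ (φ : E → ℕ) (N : ℕ), Measurable φ ∧ (∀ x, φ x ≤ N) ∧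
      (∀ k, P (frontier (φ ⁻¹' {k})) = 0) ∧
      (∀ x y, φ x ≠ 0 → φ x = φ y → dist x y ≤ 2 * e) ∧
      P (φ ⁻¹' {0}) ≤ ENNReal.ofReal e := by
  classical
  obtain ⟨c, hc, hcl⟩ := hsep
  have hne : c.Nonempty := by
    rw [Set.nonempty_iff_ne_empty]
    rintro rfl
    have : E0 = ∅ := by simpa using hcl
    simp [this] at hP1
  obtain ⟨f, rfl⟩ := hc.exists_eq_range hne
  have H : ∀ x : E, ∃ r ∈ Set.Ioo (e / 2) e, P (frontier (Metric.ball x r)) = 0 := by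
    intro x
    obtain ⟨r, hr, h⟩ := exists_null_frontier_thickening P {x} (half_lt_self he)
    exact ⟨r, hr, by simpa using h⟩
  choose r hr hfr using H
  set B : ℕ → Set E := fun k => Metric.ball (f (k - 1)) (r (f (k - 1))) with hB
  have hBo : ∀ k, IsOpen (B k) := fun k => Metric.isOpen_ball
  have hcov : E0 ⊆ ⋃ k, B (k + 1) := by
    intro x hx
    obtain ⟨y, ⟨k, rfl⟩, hy⟩ := Metric.mem_closure_iff.1 (hcl hx) (e / 2) (by positivity)
    exact Set.mem_iUnion.2 ⟨k, by simp only [hB, Metric.mem_ball]; exact hy.trans (hr _).1⟩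
  have hU : P (⋃ k, B (k + 1)) = 1 := le_antisymm prob_le_one (hP1 ▸ measure_mono hcov)
  have hlim := tendsto_measure_iUnion_accumulate (μ := P) (f := fun k => B (k + 1))
  rw [hU] at hlim
  have h1 : (1 : ℝ≥0∞) - ENNReal.ofReal e < 1 :=
    ENNReal.sub_lt_self (by simp) (by simp) (by simpa using he)
  obtain ⟨N, hN⟩ := (hlim.eventually (lt_mem_nhds h1)).exists
  have hmeas : Measurable fun x => Nat.findGreatest (fun k => x ∈ B k) (N + 1) :=
    measurable_findGreatest fun k _ => (hBo k).measurableSet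
  refine ⟨fun x => Nat.findGreatest (fun k => x ∈ B k) (N + 1), N + 1, hmeas,
    fun x => Nat.findGreatest_le _, ?_, ?_, ?_⟩
  · intro k
    refine measure_mono_null (t := ⋃ j, frontier (B j)) ?_ (measure_iUnion_null fun j => hfr _)
    intro x hx
    by_contra hx'
    simp only [Set.mem_iUnion, not_exists] at hx'
    refine absurd hx ?_
    rw [aux_notMem_frontier]
    have : ∀ᶠ y in nhds x, ∀ j ∈ Finset.range (N + 2), (y ∈ B j ↔ x ∈ B j) :=
      (Finset.eventually_all _).2 fun j _ => (aux_notMem_frontier _ _).1 (hx' j)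
    filter_upwards [this] with y hy
    simp only [Set.mem_preimage, Set.mem_singleton_iff, Nat.findGreatest_eq_iff]
    have hy' : ∀ j, j ≤ N + 1 → (y ∈ B j ↔ x ∈ B j) := fun j hj =>
      hy j (Finset.mem_range.2 (by omega))
    constructor
    · rintro ⟨a, b, c⟩
      exact ⟨a, fun h => (hy' k a).1 (b h), fun m hm hm' h => c hm hm' ((hy' m hm').2 h)⟩
    · rintro ⟨a, b, c⟩
      exact ⟨a, fun h => (hy' k a).2 (b h), fun m hm hm' h => c hm hm' ((hy' m hm').1 h)⟩
  · intro x y hx hxy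
    have h1 : x ∈ B _ := Nat.findGreatest_of_ne_zero (P := fun k => x ∈ B k) rfl hx
    have h2 : y ∈ B _ := Nat.findGreatest_of_ne_zero (P := fun k => y ∈ B k) rfl (hxy ▸ hx)
    simp only at hxy
    rw [← hxy] at h2
    simp only [hB, Metric.mem_ball] at h1 h2
    set z := f (Nat.findGreatest (fun k => x ∈ B k) (N + 1) - 1)
    have h3 := (hr z).2
    have := dist_triangle_right x y z
    change dist x z < r z at h1
    change dist y z < r z at h2
    linarith
  · have hs : (fun x => Nat.findGreatest (fun k => x ∈ B k) (N + 1)) ⁻¹' {0}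
        ⊆ (Set.accumulate (fun k => B (k + 1)) N)ᶜ := by
      intro x hx hx'
      simp only [Set.mem_preimage, Set.mem_singleton_iff, Nat.findGreatest_eq_zero_iff] at hx
      obtain ⟨k, hk, hk'⟩ := Set.mem_accumulate.1 hx'
      exact hx (by omega) (by omega) hk'
    refine (measure_mono hs).trans ?_
    have hm : MeasurableSet (Set.accumulate (fun k => B (k + 1)) N) :=
      (isOpen_biUnion fun k _ => hBo _).measurableSet
    rw [prob_compl_eq_one_sub hm, tsub_le_iff_right, add_comm, ← tsub_le_iff_right]
    exact hN.le

lemma aux_cond {E : Type} [MeasurableSpace E] (μ : Measure E) [IsProbabilityMeasure μ]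
    (B : Set E) (hB : MeasurableSet B) :
    ∃ ν : Measure E, IsProbabilityMeasure ν ∧ (B.Nonempty → ∀ᵐ x ∂ν, x ∈ B) ∧
      ∀ A, MeasurableSet A → μ B * ν A = μ (A ∩ B) := by
  by_cases h : μ B = 0
  · have h0 : ∀ A, MeasurableSet A → μ (A ∩ B) = 0 := fun A _ =>
      measure_mono_null Set.inter_subset_right h
    by_cases hne : B.Nonempty
    · obtain ⟨x, hx⟩ := hne
      refine ⟨Measure.dirac x, inferInstance, fun _ => ?_, fun A hA => ?_⟩
      · exact (ae_dirac_iff (p := fun y => y ∈ B) hB).2 hx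
      · rw [h0 A hA, h, zero_mul]
    · exact ⟨μ, inferInstance, fun h' => absurd h' hne, fun A hA => by rw [h0 A hA, h, zero_mul]⟩
  · refine ⟨ProbabilityTheory.cond μ B, ProbabilityTheory.cond_isProbabilityMeasure h,
      fun _ => ProbabilityTheory.ae_cond_mem hB, fun A hA => ?_⟩
    rw [ProbabilityTheory.cond_apply hB, ← mul_assoc, ENNReal.mul_inv_cancel h (by simp), one_mul,
      Set.inter_comm]

lemma aux_tsum {E : Type} [MeasurableSpace E] (μ : Measure E) (φ : E → ℕ) (hφ : Measurable φ)
    (A : Set E) (hA : MeasurableSet A) : ∑' i, μ (A ∩ φ ⁻¹' {i}) = μ A := by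
  rw [← measure_iUnion]
  · congr 1
    ext x
    simp
  · intro i j hij
    refine Set.disjoint_left.2 fun x hx hy => hij ?_
    exact hx.2.symm.trans hy.2
  · exact fun i => hA.inter (hφ (measurableSet_singleton i))

/-- the family of conditional laws at a fixed index -/
lemma aux_mix {E : Type} [MeasurableSpace E] (μ P : Measure E) [IsProbabilityMeasure μ]
    [IsProbabilityMeasure P] (φ : E → ℕ) (hφ : Measurable φ) (e : ℝ) (he : 0 < e) (he1 : e ≤ 1)
    (h : ∀ i, ENNReal.ofReal (1 - e) * P (φ ⁻¹' {i}) ≤ μ (φ ⁻¹' {i})) :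
    ∃ ν : ℕ → Measure E, (∀ i, IsProbabilityMeasure (ν i)) ∧
      (∀ x, ∀ᵐ y ∂(ν (φ x + 1)), φ y = φ x) ∧
      ∀ A, MeasurableSet A → ν 0 A * ENNReal.ofReal e +
        ∑' i, ν (i + 1) A * (ENNReal.ofReal (1 - e) * P (φ ⁻¹' {i})) = μ A := by
  choose ν hν1 hν2 hν3 using fun i => aux_cond μ (φ ⁻¹' {i}) (hφ (measurableSet_singleton i))
  set ρ : Measure E := Measure.sum fun i =>
    (μ (φ ⁻¹' {i}) - ENNReal.ofReal (1 - e) * P (φ ⁻¹' {i})) • ν i with hρ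
  have key : ∀ A, MeasurableSet A →
      ρ A + ∑' i, ν i A * (ENNReal.ofReal (1 - e) * P (φ ⁻¹' {i})) = μ A := by
    intro A hA
    rw [hρ, Measure.sum_apply _ hA, ← ENNReal.tsum_add, ← aux_tsum μ φ hφ A hA]
    refine tsum_congr fun i => ?_
    rw [← hν3 i A hA, Measure.smul_apply, smul_eq_mul, mul_comm (ν i A), ← add_mul,
      tsub_add_cancel_of_le (h i)]
  have heq : ENNReal.ofReal e + ENNReal.ofReal (1 - e) = 1 := by
    rw [← ENNReal.ofReal_add he.le (by linarith)]
    simp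
  have hρ1 : ρ Set.univ = ENNReal.ofReal e := by
    have h1 := key Set.univ MeasurableSet.univ
    have h2 := aux_tsum P φ hφ Set.univ MeasurableSet.univ
    simp only [Set.univ_inter, measure_univ] at h2
    simp only [measure_univ, one_mul, ENNReal.tsum_mul_left, h2, mul_one] at h1
    rw [← heq] at h1
    exact (ENNReal.add_left_inj (by simp)).1 h1
  have he0 : ENNReal.ofReal e ≠ 0 := by simpa using he
  refine ⟨fun i => Nat.casesOn i ((ENNReal.ofReal e)⁻¹ • ρ) ν, ?_, ?_, ?_⟩
  · rintro (_ | i)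
    · constructor
      change (ENNReal.ofReal e)⁻¹ * ρ Set.univ = 1
      rw [hρ1]
      exact ENNReal.inv_mul_cancel he0 (by simp)
    · exact hν1 i
  · intro x
    exact hν2 (φ x) ⟨x, rfl⟩
  · intro A hA
    change (ENNReal.ofReal e)⁻¹ * ρ A * ENNReal.ofReal e +
      ∑' i, ν i A * (ENNReal.ofReal (1 - e) * P (φ ⁻¹' {i})) = μ A
    rw [← key A hA, mul_comm, ← mul_assoc, ENNReal.mul_inv_cancel he0 (by simp), one_mul]

lemma aux_select_s18 (p : ℕ → ℕ → Prop) (h0 : ∀ n, p 0 n) (h : ∀ m, ∀ᶠ n in atTop, p m n) :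
    ∃ M : ℕ → ℕ, (∀ n, p (M n) n) ∧ Tendsto M atTop atTop := by
  classical
  refine ⟨fun n => Nat.findGreatest (fun m => p m n) n, fun n => ?_, ?_⟩
  · exact Nat.findGreatest_spec (P := fun m => p m n) (Nat.zero_le n) (h0 n)
  · rw [tendsto_atTop]
    intro m
    filter_upwards [h m, eventually_ge_atTop m] with n hn hmn
    exact Nat.le_findGreatest hmn hn

lemma aux_forward {E : Type} [MetricSpace E] [MeasurableSpace E] [BorelSpace E]
    (Pn : ℕ → Measure E) (P : Measure E)
    [∀ n, IsProbabilityMeasure (Pn n)] [IsProbabilityMeasure P]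
    (E0 : Set E) (hsep : TopologicalSpace.IsSeparable E0)
    (hP1 : P E0 = 1)
    (hc : ∀ h : E →ᵇ ℝ, Tendsto (fun n => ∫ x, h x ∂(Pn n)) atTop (nhds (∫ x, h x ∂P))) :
      ∃ (Ω : Type) (_ : MeasurableSpace Ω) (Pr : Measure Ω),
        IsProbabilityMeasure Pr ∧
        ∃ (X : ℕ → Ω → E) (X' : Ω → E),
          (∀ n, Measurable (X n)) ∧ Measurable X' ∧
          (∀ n, Pr.map (X n) = Pn n) ∧ Pr.map X' = P ∧
          (∀ᵐ ω ∂Pr, Tendsto (fun n => dist (X n ω) (X' ω)) atTop (nhds 0)) := by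
  have hT : Tendsto (β := ProbabilityMeasure E) (fun n => ⟨Pn n, inferInstance⟩) atTop
      (nhds ⟨P, inferInstance⟩) :=
    ProbabilityMeasure.tendsto_iff_forall_integral_tendsto.2 hc
  set e : ℕ → ℝ := fun m => (1 / 2) ^ m with he
  have hepos : ∀ m, 0 < e m := fun m => by positivity
  have hele : ∀ m, e m ≤ 1 := fun m => pow_le_one₀ (by norm_num) (by norm_num)
  have hetend : Tendsto e atTop (nhds 0) :=
    tendsto_pow_atTop_nhds_zero_of_lt_one (by norm_num) (by norm_num)
  choose φ N hφm hφN hφf hφd hφ0 using fun m => aux_partition P E0 hsep hP1 (e m) (hepos m)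
  obtain ⟨M, hM, hMt⟩ := aux_select_s18
    (fun m n => ∀ i, ENNReal.ofReal (1 - e m) * P (φ m ⁻¹' {i}) ≤ Pn n (φ m ⁻¹' {i}))
    (fun n i => by simp [he]) (by
      intro m
      have : ∀ᶠ n in atTop, ∀ i ∈ Finset.range (N m + 1),
          ENNReal.ofReal (1 - e m) * P (φ m ⁻¹' {i}) ≤ Pn n (φ m ⁻¹' {i}) := by
        refine (Finset.eventually_all _).2 fun i _ => ?_
        by_cases h0 : P (φ m ⁻¹' {i}) = 0
        · simp [h0]
        have ht : Tendsto (fun n => Pn n (φ m ⁻¹' {i})) atTop (nhds (P (φ m ⁻¹' {i}))) :=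
          ProbabilityMeasure.tendsto_measure_of_null_frontier_of_tendsto' hT (hφf m i)
        refine (ht.eventually (lt_mem_nhds ?_)).mono fun n hn => hn.le
        conv_rhs => rw [← one_mul (P (φ m ⁻¹' {i}))]
        refine ENNReal.mul_lt_mul_left h0 (by simp) ?_
        rw [← ENNReal.ofReal_one]
        exact (ENNReal.ofReal_lt_ofReal_iff one_pos).2 (by linarith [hepos m])
      filter_upwards [this] with n hn i
      by_cases hi : i ∈ Finset.range (N m + 1)
      · exact hn i hi
      · have : φ m ⁻¹' {i} = ∅ := by
          ext x
          have := hφN m x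
          simp only [Finset.mem_range] at hi
          simp only [Set.mem_preimage, Set.mem_singleton_iff, Set.mem_empty_iff_false, iff_false]
          omega
        simp [this])
  choose ν hν1 hν2 hν3 using fun n => aux_mix (Pn n) P (φ (M n)) (hφm _) (e (M n)) (hepos _)
    (hele _) (hM n)
  let ν' : ℕ × ℕ → Measure E := fun q => ν q.1 q.2
  haveI : ∀ q, IsProbabilityMeasure (ν' q) := fun q => hν1 q.1 q.2
  let L : Measure ℝ := volume.restrict (Set.Ioc 0 1)
  haveI : IsProbabilityMeasure L := ⟨by simp [L]⟩
  let Q : Measure (E × ℝ) := P.prod L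
  let I : Measure (ℕ × ℕ → E) := Measure.infinitePi ν'
  let j : ℕ → E × ℝ → ℕ := fun n q => if e (M n) < q.2 then φ (M n) q.1 + 1 else 0
  have hj : ∀ n, Measurable (j n) := fun n =>
    Measurable.ite (measurableSet_lt measurable_const measurable_snd)
      (((hφm _).comp measurable_fst).add_const 1) measurable_const
  have hXm : ∀ n, Measurable fun ω : (E × ℝ) × (ℕ × ℕ → E) => ω.2 (n, j n ω.1) := by
    intro n
    have h1 : Measurable fun p : ℕ × (ℕ × ℕ → E) => p.2 (n, p.1) :=
      measurable_from_prod_countable_right fun i => measurable_pi_apply (n, i)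
    exact h1.comp (((hj n).comp measurable_fst).prodMk measurable_snd)
  have hI : ∀ q A, MeasurableSet A → I {y | y q ∈ A} = ν' q A := by
    intro q A hA
    rw [← Measure.infinitePi_map_eval ν' q, Measure.map_apply (measurable_pi_apply q) hA]
    rfl
  refine ⟨(E × ℝ) × (ℕ × ℕ → E), inferInstance, Q.prod I, inferInstance,
    fun n ω => ω.2 (n, j n ω.1), fun ω => ω.1.1, hXm, by fun_prop, ?_, ?_, ?_⟩
  · intro n
    ext A hA
    rw [Measure.map_apply (hXm n) hA, Measure.prod_apply (hXm n hA)]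
    have h1 : ∀ q : E × ℝ, I (Prod.mk q ⁻¹' ((fun ω : (E × ℝ) × (ℕ × ℕ → E) =>
        ω.2 (n, j n ω.1)) ⁻¹' A)) = ν n (j n q) A := fun q => hI (n, j n q) A hA
    simp_rw [h1]
    rw [← lintegral_map (f := fun k => ν n k A) (measurable_of_countable _) (hj n),
      lintegral_countable', tsum_eq_zero_add' ENNReal.summable, ← hν3 n A hA]
    congr 1
    · congr 1
      rw [Measure.map_apply (hj n) (measurableSet_singleton _)]
      have : j n ⁻¹' {0} = Set.univ ×ˢ Set.Iic (e (M n)) := by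
        ext q
        simp [j]
      rw [this, Measure.prod_prod, measure_univ, one_mul, Measure.restrict_apply measurableSet_Iic]
      have : Set.Iic (e (M n)) ∩ Set.Ioc 0 1 = Set.Ioc 0 (e (M n)) := by
        ext u
        have := hele (M n)
        simp only [Set.mem_inter_iff, Set.mem_Iic, Set.mem_Ioc]
        constructor
        · rintro ⟨a, b, c⟩; exact ⟨b, a⟩
        · rintro ⟨a, b⟩; exact ⟨b, a, b.trans this⟩
      rw [this, Real.volume_Ioc, sub_zero]
    · refine tsum_congr fun i => ?_
      congr 1
      rw [Measure.map_apply (hj n) (measurableSet_singleton _)]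
      have : j n ⁻¹' {i + 1} = (φ (M n) ⁻¹' {i}) ×ˢ Set.Ioi (e (M n)) := by
        ext q
        simp only [j, Set.mem_preimage, Set.mem_singleton_iff, Set.mem_prod, Set.mem_Ioi]
        split_ifs with h <;> simp [h]
      rw [this, Measure.prod_prod, mul_comm, Measure.restrict_apply measurableSet_Ioi]
      have : Set.Ioi (e (M n)) ∩ Set.Ioc 0 1 = Set.Ioc (e (M n)) 1 := by
        ext u
        have := hepos (M n)
        simp only [Set.mem_inter_iff, Set.mem_Ioi, Set.mem_Ioc]
        constructor
        · rintro ⟨a, b, c⟩; exact ⟨a, c⟩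
        · rintro ⟨a, b⟩; exact ⟨a, this.trans a, b⟩
      rw [this, Real.volume_Ioc]
  · change (Q.prod I).map (Prod.fst ∘ Prod.fst) = P
    rw [← Measure.map_map measurable_fst measurable_fst]
    change ((Q.prod I).fst).fst = P
    rw [Measure.fst_prod, Measure.fst_prod]
  · have a1 : ∀ᵐ x ∂P, ∀ᶠ m in atTop, φ m x ≠ 0 := by
      have := ae_eventually_notMem (μ := P) (s := fun m => φ m ⁻¹' {0}) (by
        refine ne_top_of_le_ne_top ?_ (ENNReal.tsum_le_tsum hφ0)
        rw [← ENNReal.ofReal_tsum_of_nonneg (fun m => (hepos m).le) summable_geometric_two]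
        simp)
      filter_upwards [this] with x hx
      filter_upwards [hx] with m hm
      exact hm
    have a2 : ∀ᵐ u ∂L, 0 < u := by
      filter_upwards [ae_restrict_mem measurableSet_Ioc] with u hu
      exact hu.1
    have a3 : ∀ᵐ y ∂I, ∀ n k, (∃ x, φ (M n) x = k) → φ (M n) (y (n, k + 1)) = k := by
      rw [ae_all_iff]; intro n
      rw [ae_all_iff]; intro k
      by_cases hk : ∃ x, φ (M n) x = k
      · obtain ⟨x, rfl⟩ := hk
        have h := hν2 n x
        change ∀ᵐ y ∂(ν' (n, φ (M n) x + 1)), _ at h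
        rw [← Measure.infinitePi_map_eval ν' (n, φ (M n) x + 1)] at h
        have h' := ae_of_ae_map (measurable_pi_apply _).aemeasurable h
        filter_upwards [h'] with y hy _
        exact hy
      · exact Eventually.of_forall fun y h => absurd h hk
    have b1 : ∀ᵐ ω ∂(Q.prod I), ∀ᶠ m in atTop, φ m ω.1.1 ≠ 0 :=
      Measure.quasiMeasurePreserving_fst.ae (Measure.quasiMeasurePreserving_fst.ae a1)
    have b2 : ∀ᵐ ω ∂(Q.prod I), 0 < ω.1.2 :=
      Measure.quasiMeasurePreserving_fst.ae (Measure.quasiMeasurePreserving_snd.ae a2)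
    have b3 : ∀ᵐ ω ∂(Q.prod I), ∀ n k, (∃ x, φ (M n) x = k) → φ (M n) (ω.2 (n, k + 1)) = k :=
      Measure.quasiMeasurePreserving_snd.ae a3
    filter_upwards [b1, b2, b3] with ω h1 h2 h3
    have hlim : Tendsto (fun n => 2 * e (M n)) atTop (nhds 0) := by
      simpa using (hetend.comp hMt).const_mul 2
    refine squeeze_zero' (Eventually.of_forall fun n => dist_nonneg) ?_ hlim
    filter_upwards [hMt.eventually h1,
      (hetend.comp hMt).eventually (gt_mem_nhds h2)] with n hn1 hn2
    have hjn : j n ω.1 = φ (M n) ω.1.1 + 1 := if_pos hn2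
    have h4 := h3 n _ ⟨ω.1.1, rfl⟩
    rw [hjn, dist_comm]
    exact hφd _ _ _ hn1 h4.symm

/-- Skorohod representation theorem (Dudley–Wichura version): if `X` takes
values a.s. in a separable Borel set, then `Xₙ → X` in distribution iff there
is a coupling `(X̂₁, X̂₂, …, X̂)` with `d(X̂ₙ, X̂) → 0` almost surely. -/
theorem stmt18 {E : Type} [MetricSpace E] [MeasurableSpace E] [BorelSpace E]
    (Pn : ℕ → Measure E) (P : Measure E)
    [∀ n, IsProbabilityMeasure (Pn n)] [IsProbabilityMeasure P]
    (E0 : Set E) (hE0 : MeasurableSet E0) (hsep : TopologicalSpace.IsSeparable E0)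
    (hP1 : P E0 = 1) :
    (∀ h : E →ᵇ ℝ, Tendsto (fun n => ∫ x, h x ∂(Pn n)) atTop (nhds (∫ x, h x ∂P))) ↔
      ∃ (Ω : Type) (_ : MeasurableSpace Ω) (Pr : Measure Ω),
        IsProbabilityMeasure Pr ∧
        ∃ (X : ℕ → Ω → E) (X' : Ω → E),
          (∀ n, Measurable (X n)) ∧ Measurable X' ∧
          (∀ n, Pr.map (X n) = Pn n) ∧ Pr.map X' = P ∧
          (∀ᵐ ω ∂Pr, Tendsto (fun n => dist (X n ω) (X' ω)) atTop (nhds 0)) := by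
  refine ⟨aux_forward Pn P E0 hsep hP1, ?_⟩
  rintro ⟨Ω, _, Pr, _, X, X', hX, hX', hXl, hXl', hae⟩ h
  have hm : Measurable h := h.continuous.measurable
  have e1 : ∀ n, ∫ x, h x ∂(Pn n) = ∫ ω, h (X n ω) ∂Pr := fun n => by
    rw [← hXl n, integral_map (hX n).aemeasurable hm.aestronglyMeasurable]
  have e2 : ∫ x, h x ∂P = ∫ ω, h (X' ω) ∂Pr := by
    rw [← hXl', integral_map hX'.aemeasurable hm.aestronglyMeasurable]
  simp_rw [e1, e2]
  refine tendsto_integral_of_dominated_convergence (fun _ => ‖h‖)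
    (fun n => (hm.comp (hX n)).aestronglyMeasurable) (integrable_const _)
    (fun n => Eventually.of_forall fun ω => h.norm_coe_le_norm _) ?_
  filter_upwards [hae] with ω hω
  exact (h.continuous.tendsto _).comp (tendsto_iff_dist_tendsto_zero.2 hω)
end
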